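/- In the exterior algebra on e₁,…,e₉ over ℚ, the ideal generated by the 27 quadratic elements e₁e₅, e₁e₆, e₂e₇, e₂e₈, e₃e₅, e₃e₆, e₃e₇, e₃e₉, e₄e₅, e₄e₆, e₄e₈, e₄e₉, e₅e₇, e₅e₈, e₅e₉, e₆e₇, e₆e₈, e₆e₉, e₇e₈, e₇e₉, e₈e₉, e₁e₇+e₂e₃, e₁e₈−e₂e₄, e₁e₉+e₃e₄, e₁e₉+e₅e₆, e₂e₉−e₃e₈, e₃e₈−e₄e₇ gives a quotient with Hilbert series 1 + 9z + 9z² + z³. -/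

import Mathlib

open ExteriorAlgebra

namespace Stmt19

/-- The exterior algebra over `ℚ` on nine degree-1 generators. -/
abbrev E : Type := ExteriorAlgebra ℚ (Fin 9 → ℚ)

/-- The generators `e₁, …, e₉`. -/
noncomputable def e (i : Fin 9) : E := ι ℚ (Pi.single i 1)

/-- The 27 quadratic relations of case 77 of the Vinberg–Elashvili classification. -/
def rel : E → E → Prop := fun a b =>
  b = 0 ∧ a ∈ ({e 0 * e 4, e 0 * e 5, e 1 * e 6, e 1 * e 7, e 2 * e 4, e 2 * e 5,
                 e 2 * e 6, e 2 * e 8, e 3 * e 4, e 3 * e 5, e 3 * e 7, e 3 * e 8,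
                 e 4 * e 6, e 4 * e 7, e 4 * e 8, e 5 * e 6, e 5 * e 7, e 5 * e 8,
                 e 6 * e 7, e 6 * e 8, e 7 * e 8,
                 e 0 * e 6 + e 1 * e 2, e 0 * e 7 - e 1 * e 3,
                 e 0 * e 8 + e 2 * e 3, e 0 * e 8 + e 4 * e 5,
                 e 1 * e 8 - e 2 * e 7, e 2 * e 7 - e 3 * e 6} : Set E)

/-- The quotient of the exterior algebra by the 27 quadratic elements. -/
abbrev A : Type := RingQuot rel

/-- The degree-`n` component of the quotient. -/
noncomputable def piece (n : ℕ) : Submodule ℚ A :=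
  Submodule.map (RingQuot.mkAlgHom ℚ rel).toLinearMap
    ((LinearMap.range (ι ℚ : (Fin 9 → ℚ) →ₗ[ℚ] E)) ^ n)

end Stmt19

set_option linter.all false

namespace Stmt19

/-- The alternating product `V × V → V*` attached to the trivector
`018 + 027 + 036 + 123 + 145`. -/
def cprod (u v : Fin 9 → ℚ) : Fin 9 → ℚ :=
  ![(u 1 * v 8 - u 8 * v 1) + (u 2 * v 7 - u 7 * v 2) + (u 3 * v 6 - u 6 * v 3),
    (u 8 * v 0 - u 0 * v 8) + (u 2 * v 3 - u 3 * v 2) + (u 4 * v 5 - u 5 * v 4),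
    (u 7 * v 0 - u 0 * v 7) + (u 3 * v 1 - u 1 * v 3),
    (u 6 * v 0 - u 0 * v 6) + (u 1 * v 2 - u 2 * v 1),
    (u 5 * v 1 - u 1 * v 5),
    (u 1 * v 4 - u 4 * v 1),
    (u 0 * v 3 - u 3 * v 0),
    (u 0 * v 2 - u 2 * v 0),
    (u 0 * v 1 - u 1 * v 0)]

/-- The model of the quotient algebra as a graded vector space. -/
abbrev M : Type := ℚ × (Fin 9 → ℚ) × (Fin 9 → ℚ) × ℚ

/-- Left multiplication by a degree one element on the model. -/
def lmul : (Fin 9 → ℚ) →ₗ[ℚ] Module.End ℚ M :=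
  LinearMap.mk₂ ℚ (fun u m => ((0, m.1 • u, cprod u m.2.1, ∑ i, u i * m.2.2.1 i) : M))
    (by
      intro u u' m
      refine Prod.ext (by simp) (Prod.ext (by simp) (Prod.ext ?_ ?_))
      · ext k
        fin_cases k <;> simp [cprod] <;> ring
      · simp [add_mul, Finset.sum_add_distrib])
    (by
      intro a u m
      refine Prod.ext (by simp) (Prod.ext (by simp [smul_smul, mul_comm]) (Prod.ext ?_ ?_))
      · ext k
        fin_cases k <;> simp [cprod] <;> ring
      · simp [mul_assoc, Finset.mul_sum])
    (by
      intro u m m'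
      refine Prod.ext (by simp) (Prod.ext (by simp [add_smul]) (Prod.ext ?_ ?_))
      · ext k
        fin_cases k <;> simp [cprod] <;> ring
      · simp [mul_add, Finset.sum_add_distrib])
    (by
      intro a u m
      refine Prod.ext (by simp) (Prod.ext (by simp [smul_smul]) (Prod.ext ?_ ?_))
      · ext k
        fin_cases k <;> simp [cprod] <;> ring
      · simp [Finset.mul_sum, mul_left_comm])

theorem lmul_apply (u : Fin 9 → ℚ) (m : M) :
    lmul u m = (0, m.1 • u, cprod u m.2.1, ∑ i, u i * m.2.2.1 i) := rfl

theorem lmul_mul_apply (u v : Fin 9 → ℚ) (m : M) :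
    (lmul u * lmul v) m = (0, 0, m.1 • cprod u v, ∑ i, u i * cprod v m.2.1 i) := by
  rw [Module.End.mul_apply, lmul_apply, lmul_apply]
  refine Prod.ext rfl (Prod.ext (by simp) (Prod.ext ?_ rfl))
  ext k
  fin_cases k <;> simp [cprod] <;> ring

theorem lmul_sq (u : Fin 9 → ℚ) : lmul u * lmul u = 0 := by
  refine LinearMap.ext fun m => ?_
  rw [lmul_mul_apply]
  refine Prod.ext rfl (Prod.ext rfl (Prod.ext ?_ ?_))
  · ext k
    fin_cases k <;> simp [cprod] <;> ring_nf <;> simp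
  · simp [cprod, Fin.sum_univ_succ]
    ring

/-- The action of the exterior algebra on the model. -/
noncomputable def actE : E →ₐ[ℚ] Module.End ℚ M :=
  ExteriorAlgebra.lift ℚ ⟨lmul, lmul_sq⟩

theorem actE_e (i : Fin 9) : actE (e i) = lmul (Pi.single i 1) := by
  simp [actE, e]

set_option maxHeartbeats 8000000 in
theorem actE_rel {a b : E} (h : rel a b) : actE a = actE b := by
  obtain ⟨rfl, h⟩ := h
  rw [map_zero]
  simp only [Set.mem_insert_iff, Set.mem_singleton_iff] at h
  rcases h with h | h | h | h | h | h | h | h | h | h | h | h | h | h | h | h | h | h | h | h |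
    h | h | h | h | h | h | h <;> subst h <;>
  simp only [map_mul, map_add, map_sub, actE_e] <;>
  refine LinearMap.ext fun m => ?_ <;>
  simp only [LinearMap.add_apply, LinearMap.sub_apply, lmul_mul_apply, LinearMap.zero_apply] <;>
  refine Prod.ext (by simp) (Prod.ext (by simp) (Prod.ext ?_ ?_)) <;>
  first
  | (ext k
     fin_cases k <;> simp [cprod, Pi.single_apply])
  | (simp [cprod, Fin.sum_univ_succ, Pi.single_apply]; try ring)

/-- The action of the quotient on the model. -/
noncomputable def actA : A →ₐ[ℚ] Module.End ℚ M :=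
  RingQuot.liftAlgHom ℚ ⟨actE, fun _ _ h => actE_rel h⟩

/-- Evaluation of the action at the unit vector. -/
noncomputable def ev : A →ₗ[ℚ] M :=
  (LinearMap.applyₗ ((1, 0, 0, 0) : M)).comp actA.toLinearMap

/-- The generators of the quotient. -/
noncomputable def x (i : Fin 9) : A := RingQuot.mkAlgHom ℚ rel (e i)

theorem actA_x (i : Fin 9) : actA (x i) = lmul (Pi.single i 1) := by
  simp [actA, x, actE_e]

theorem ev_apply (a : A) : ev a = actA a (1, 0, 0, 0) := rfl

theorem x_sq (i : Fin 9) : x i * x i = 0 := by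
  simp [x, e, ← map_mul]

theorem x_anti (i j : Fin 9) : x i * x j = -(x j * x i) := by
  have h : e i * e j + e j * e i = 0 := ExteriorAlgebra.ι_add_mul_swap _ _
  have h2 := congrArg (RingQuot.mkAlgHom ℚ rel) h
  rw [map_add, map_mul, map_mul, map_zero] at h2
  exact eq_neg_of_add_eq_zero_left h2

theorem mk_rel {a : E} (h : rel a 0) : RingQuot.mkAlgHom ℚ rel a = 0 := by
  rw [RingQuot.mkAlgHom_rel ℚ h, map_zero]

theorem r04 : x 0 * x 4 = 0 := by
  rw [x, x, ← map_mul]; exact mk_rel (by simp [rel])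
theorem r05 : x 0 * x 5 = 0 := by
  rw [x, x, ← map_mul]; exact mk_rel (by simp [rel])
theorem r16 : x 1 * x 6 = 0 := by
  rw [x, x, ← map_mul]; exact mk_rel (by simp [rel])
theorem r17 : x 1 * x 7 = 0 := by
  rw [x, x, ← map_mul]; exact mk_rel (by simp [rel])
theorem r24 : x 2 * x 4 = 0 := by
  rw [x, x, ← map_mul]; exact mk_rel (by simp [rel])
theorem r25 : x 2 * x 5 = 0 := by
  rw [x, x, ← map_mul]; exact mk_rel (by simp [rel])
theorem r26 : x 2 * x 6 = 0 := by
  rw [x, x, ← map_mul]; exact mk_rel (by simp [rel])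
theorem r28 : x 2 * x 8 = 0 := by
  rw [x, x, ← map_mul]; exact mk_rel (by simp [rel])
theorem r34 : x 3 * x 4 = 0 := by
  rw [x, x, ← map_mul]; exact mk_rel (by simp [rel])
theorem r35 : x 3 * x 5 = 0 := by
  rw [x, x, ← map_mul]; exact mk_rel (by simp [rel])
theorem r37 : x 3 * x 7 = 0 := by
  rw [x, x, ← map_mul]; exact mk_rel (by simp [rel])
theorem r38 : x 3 * x 8 = 0 := by
  rw [x, x, ← map_mul]; exact mk_rel (by simp [rel])
theorem r46 : x 4 * x 6 = 0 := by
  rw [x, x, ← map_mul]; exact mk_rel (by simp [rel])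
theorem r47 : x 4 * x 7 = 0 := by
  rw [x, x, ← map_mul]; exact mk_rel (by simp [rel])
theorem r48 : x 4 * x 8 = 0 := by
  rw [x, x, ← map_mul]; exact mk_rel (by simp [rel])
theorem r56 : x 5 * x 6 = 0 := by
  rw [x, x, ← map_mul]; exact mk_rel (by simp [rel])
theorem r57 : x 5 * x 7 = 0 := by
  rw [x, x, ← map_mul]; exact mk_rel (by simp [rel])
theorem r58 : x 5 * x 8 = 0 := by
  rw [x, x, ← map_mul]; exact mk_rel (by simp [rel])
theorem r67 : x 6 * x 7 = 0 := by
  rw [x, x, ← map_mul]; exact mk_rel (by simp [rel])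
theorem r68 : x 6 * x 8 = 0 := by
  rw [x, x, ← map_mul]; exact mk_rel (by simp [rel])
theorem r78 : x 7 * x 8 = 0 := by
  rw [x, x, ← map_mul]; exact mk_rel (by simp [rel])
theorem qa : x 0 * x 6 + x 1 * x 2 = 0 := by
  rw [x, x, x, x, ← map_mul, ← map_mul, ← map_add]; exact mk_rel (by simp [rel])
theorem qb : x 0 * x 7 - x 1 * x 3 = 0 := by
  rw [x, x, x, x, ← map_mul, ← map_mul, ← map_sub]; exact mk_rel (by simp [rel])
theorem qc : x 0 * x 8 + x 2 * x 3 = 0 := by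
  rw [x, x, x, x, ← map_mul, ← map_mul, ← map_add]; exact mk_rel (by simp [rel])
theorem qd : x 0 * x 8 + x 4 * x 5 = 0 := by
  rw [x, x, x, x, ← map_mul, ← map_mul, ← map_add]; exact mk_rel (by simp [rel])
theorem qe : x 1 * x 8 - x 2 * x 7 = 0 := by
  rw [x, x, x, x, ← map_mul, ← map_mul, ← map_sub]; exact mk_rel (by simp [rel])
theorem qf : x 2 * x 7 - x 3 * x 6 = 0 := by
  rw [x, x, x, x, ← map_mul, ← map_mul, ← map_sub]; exact mk_rel (by simp [rel])
theorem r12 : x 1 * x 2 = -(x 0 * x 6) := eq_neg_of_add_eq_zero_right qa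
theorem r13 : x 1 * x 3 = x 0 * x 7 := (sub_eq_zero.mp qb).symm
theorem r23 : x 2 * x 3 = -(x 0 * x 8) := eq_neg_of_add_eq_zero_right qc
theorem r45 : x 4 * x 5 = -(x 0 * x 8) := eq_neg_of_add_eq_zero_right qd
theorem r27 : x 2 * x 7 = x 1 * x 8 := (sub_eq_zero.mp qe).symm
theorem r36 : x 3 * x 6 = x 1 * x 8 := (sub_eq_zero.mp qf).symm.trans r27

theorem ext_rule {a b c : A} (h : a * b = c) (y : A) : a * (b * y) = c * y := by
  rw [← mul_assoc, h]

theorem r014 : x 0 * (x 1 * x 4) = 0 := by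
  rw [x_anti 1 4, mul_neg, ← mul_assoc, r04, zero_mul, neg_zero]

theorem r015 : x 0 * (x 1 * x 5) = 0 := by
  rw [x_anti 1 5, mul_neg, ← mul_assoc, r05, zero_mul, neg_zero]

/-- The degree two basis, dual to `x`. -/
noncomputable def f : Fin 9 → A :=
  ![x 1 * x 8, -(x 0 * x 8), -(x 0 * x 7), -(x 0 * x 6), -(x 1 * x 5), x 1 * x 4,
    x 0 * x 3, x 0 * x 2, x 0 * x 1]

/-- The degree three basis. -/
noncomputable def vol : A := x 0 * (x 1 * x 8)

theorem f_mem (k : Fin 9) : f k ∈ Submodule.span ℚ (Set.range f) :=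
  Submodule.subset_span ⟨k, rfl⟩

theorem m01 : x 0 * x 1 ∈ Submodule.span ℚ (Set.range f) := f_mem 8
theorem m02 : x 0 * x 2 ∈ Submodule.span ℚ (Set.range f) := f_mem 7
theorem m03 : x 0 * x 3 ∈ Submodule.span ℚ (Set.range f) := f_mem 6
theorem m06 : x 0 * x 6 ∈ Submodule.span ℚ (Set.range f) :=
  neg_mem_iff.mp (f_mem 3)
theorem m07 : x 0 * x 7 ∈ Submodule.span ℚ (Set.range f) :=
  neg_mem_iff.mp (f_mem 2)
theorem m08 : x 0 * x 8 ∈ Submodule.span ℚ (Set.range f) :=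
  neg_mem_iff.mp (f_mem 1)
theorem m14 : x 1 * x 4 ∈ Submodule.span ℚ (Set.range f) := f_mem 5
theorem m15 : x 1 * x 5 ∈ Submodule.span ℚ (Set.range f) :=
  neg_mem_iff.mp (f_mem 4)
theorem m18 : x 1 * x 8 ∈ Submodule.span ℚ (Set.range f) := f_mem 0

set_option maxHeartbeats 4000000 in
theorem xx_mem (i j : Fin 9) : x i * x j ∈ Submodule.span ℚ (Set.range f) := by
  fin_cases i <;> fin_cases j <;> simp only [Fin.reduceFinMk, Fin.isValue, Fin.zero_eta, Fin.mk_one, neg_neg, neg_zero, neg_mem_iff, Submodule.zero_mem,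
    m01, m02, m03, m06, m07, m08, m14, m15, m18,
    r04, r05, r16, r17, r24, r25, r26, r28, r34, r35, r37, r38, r46, r47, r48, r56, r57, r58,
    r67, r68, r78, r12, r13, r23, r45, r27, r36, x_sq, x_anti 1 0, x_anti 2 0, x_anti 3 0,
    x_anti 4 0, x_anti 5 0, x_anti 6 0, x_anti 7 0, x_anti 8 0, x_anti 2 1, x_anti 3 1,
    x_anti 4 1, x_anti 5 1, x_anti 6 1, x_anti 7 1, x_anti 8 1, x_anti 3 2, x_anti 4 2,
    x_anti 5 2, x_anti 6 2, x_anti 7 2, x_anti 8 2, x_anti 4 3, x_anti 5 3, x_anti 6 3,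
    x_anti 7 3, x_anti 8 3, x_anti 5 4, x_anti 6 4, x_anti 7 4, x_anti 8 4, x_anti 6 5,
    x_anti 7 5, x_anti 8 5, x_anti 7 6, x_anti 8 6, x_anti 8 7]

set_option maxHeartbeats 8000000 in
theorem xf (i k : Fin 9) : x i * f k = if i = k then vol else 0 := by
  fin_cases i <;> fin_cases k <;> simp [f, vol, r014, r015, mul_assoc,
    r04, r05, r16, r17, r24, r25, r26, r28, r34, r35, r37, r38, r46, r47, r48, r56, r57, r58,
    r67, r68, r78, r12, r13, r23, r45, r27, r36, x_sq, x_anti 1 0, x_anti 2 0, x_anti 3 0,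
    x_anti 4 0, x_anti 5 0, x_anti 6 0, x_anti 7 0, x_anti 8 0, x_anti 2 1, x_anti 3 1,
    x_anti 4 1, x_anti 5 1, x_anti 6 1, x_anti 7 1, x_anti 8 1, x_anti 3 2, x_anti 4 2,
    x_anti 5 2, x_anti 6 2, x_anti 7 2, x_anti 8 2, x_anti 4 3, x_anti 5 3, x_anti 6 3,
    x_anti 7 3, x_anti 8 3, x_anti 5 4, x_anti 6 4, x_anti 7 4, x_anti 8 4, x_anti 6 5,
    x_anti 7 5, x_anti 8 5, x_anti 7 6, x_anti 8 6, x_anti 8 7, ext_rule r04, ext_rule r05,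
    ext_rule r16, ext_rule r17, ext_rule r24, ext_rule r25, ext_rule r26, ext_rule r28,
    ext_rule r34, ext_rule r35, ext_rule r37, ext_rule r38, ext_rule r46, ext_rule r47,
    ext_rule r48, ext_rule r56, ext_rule r57, ext_rule r58, ext_rule r67, ext_rule r68,
    ext_rule r78, ext_rule r12, ext_rule r13, ext_rule r23, ext_rule r45, ext_rule r27,
    ext_rule r36, ext_rule (x_anti 1 0), ext_rule (x_anti 2 0), ext_rule (x_anti 3 0),
    ext_rule (x_anti 4 0), ext_rule (x_anti 5 0), ext_rule (x_anti 6 0), ext_rule (x_anti 7 0),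
    ext_rule (x_anti 8 0), ext_rule (x_anti 2 1), ext_rule (x_anti 3 1), ext_rule (x_anti 4 1),
    ext_rule (x_anti 5 1), ext_rule (x_anti 6 1), ext_rule (x_anti 7 1), ext_rule (x_anti 8 1),
    ext_rule (x_anti 3 2), ext_rule (x_anti 4 2), ext_rule (x_anti 5 2), ext_rule (x_anti 6 2),
    ext_rule (x_anti 7 2), ext_rule (x_anti 8 2), ext_rule (x_anti 4 3), ext_rule (x_anti 5 3),
    ext_rule (x_anti 6 3), ext_rule (x_anti 7 3), ext_rule (x_anti 8 3), ext_rule (x_anti 5 4),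
    ext_rule (x_anti 6 4), ext_rule (x_anti 7 4), ext_rule (x_anti 8 4), ext_rule (x_anti 6 5),
    ext_rule (x_anti 7 5), ext_rule (x_anti 8 5), ext_rule (x_anti 7 6), ext_rule (x_anti 8 6),
    ext_rule (x_anti 8 7), ext_rule (x_sq _)]

set_option maxHeartbeats 4000000 in
theorem xvol (i : Fin 9) : x i * vol = 0 := by
  fin_cases i <;> simp [vol, r014, r015, mul_assoc,
    r04, r05, r16, r17, r24, r25, r26, r28, r34, r35, r37, r38, r46, r47, r48, r56, r57, r58,
    r67, r68, r78, r12, r13, r23, r45, r27, r36, x_sq, x_anti 1 0, x_anti 2 0, x_anti 3 0,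
    x_anti 4 0, x_anti 5 0, x_anti 6 0, x_anti 7 0, x_anti 8 0, x_anti 2 1, x_anti 3 1,
    x_anti 4 1, x_anti 5 1, x_anti 6 1, x_anti 7 1, x_anti 8 1, x_anti 3 2, x_anti 4 2,
    x_anti 5 2, x_anti 6 2, x_anti 7 2, x_anti 8 2, x_anti 4 3, x_anti 5 3, x_anti 6 3,
    x_anti 7 3, x_anti 8 3, x_anti 5 4, x_anti 6 4, x_anti 7 4, x_anti 8 4, x_anti 6 5,
    x_anti 7 5, x_anti 8 5, x_anti 7 6, x_anti 8 6, x_anti 8 7, ext_rule r04, ext_rule r05,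
    ext_rule r16, ext_rule r17, ext_rule r24, ext_rule r25, ext_rule r26, ext_rule r28,
    ext_rule r34, ext_rule r35, ext_rule r37, ext_rule r38, ext_rule r46, ext_rule r47,
    ext_rule r48, ext_rule r56, ext_rule r57, ext_rule r58, ext_rule r67, ext_rule r68,
    ext_rule r78, ext_rule r12, ext_rule r13, ext_rule r23, ext_rule r45, ext_rule r27,
    ext_rule r36, ext_rule (x_anti 1 0), ext_rule (x_anti 2 0), ext_rule (x_anti 3 0),
    ext_rule (x_anti 4 0), ext_rule (x_anti 5 0), ext_rule (x_anti 6 0), ext_rule (x_anti 7 0),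
    ext_rule (x_anti 8 0), ext_rule (x_anti 2 1), ext_rule (x_anti 3 1), ext_rule (x_anti 4 1),
    ext_rule (x_anti 5 1), ext_rule (x_anti 6 1), ext_rule (x_anti 7 1), ext_rule (x_anti 8 1),
    ext_rule (x_anti 3 2), ext_rule (x_anti 4 2), ext_rule (x_anti 5 2), ext_rule (x_anti 6 2),
    ext_rule (x_anti 7 2), ext_rule (x_anti 8 2), ext_rule (x_anti 4 3), ext_rule (x_anti 5 3),
    ext_rule (x_anti 6 3), ext_rule (x_anti 7 3), ext_rule (x_anti 8 3), ext_rule (x_anti 5 4),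
    ext_rule (x_anti 6 4), ext_rule (x_anti 7 4), ext_rule (x_anti 8 4), ext_rule (x_anti 6 5),
    ext_rule (x_anti 7 5), ext_rule (x_anti 8 5), ext_rule (x_anti 7 6), ext_rule (x_anti 8 6),
    ext_rule (x_anti 8 7), ext_rule (x_sq _)]

theorem ev_x (i : Fin 9) : ev (x i) = (0, Pi.single i 1, 0, 0) := by
  rw [ev_apply, actA_x, lmul_apply]
  refine Prod.ext rfl (Prod.ext (by simp) (Prod.ext ?_ (by simp)))
  ext k
  fin_cases k <;> simp [cprod]

theorem ev_xx (i j : Fin 9) :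
    ev (x i * x j) = (0, 0, cprod (Pi.single i 1) (Pi.single j 1), 0) := by
  rw [ev_apply, map_mul, actA_x, actA_x, lmul_mul_apply]
  refine Prod.ext rfl (Prod.ext rfl (Prod.ext (by simp) ?_))
  simp [cprod, Fin.sum_univ_succ]

theorem ev_f (k : Fin 9) : ev (f k) = (0, 0, Pi.single k 1, 0) := by
  fin_cases k <;> simp only [f, Fin.reduceFinMk, Fin.isValue, Fin.zero_eta, Fin.mk_one,
    Matrix.cons_val, map_neg, ev_xx] <;>
  refine Prod.ext (by simp) (Prod.ext (by simp) (Prod.ext ?_ (by simp))) <;>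
  ext k <;> fin_cases k <;> simp [cprod, Pi.single_apply]

theorem ev_vol : ev vol = (0, 0, 0, 1) := by
  have h : vol = x 0 * f 0 := rfl
  rw [h, ev_apply, map_mul, Module.End.mul_apply, ← ev_apply, ev_f, actA_x, lmul_apply]
  refine Prod.ext rfl (Prod.ext (by simp) (Prod.ext ?_ (by simp [Fin.sum_univ_succ])))
  ext k
  fin_cases k <;> simp [cprod]

theorem li_x : LinearIndependent ℚ x := by
  refine LinearIndependent.of_comp
    ((LinearMap.fst ℚ _ _).comp ((LinearMap.snd ℚ _ _).comp ev)) ?_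
  convert (Pi.basisFun ℚ (Fin 9)).linearIndependent using 1
  ext i : 1
  simp [ev_x]

theorem li_f : LinearIndependent ℚ f := by
  refine LinearIndependent.of_comp
    ((LinearMap.fst ℚ _ _).comp ((LinearMap.snd ℚ _ _).comp ((LinearMap.snd ℚ _ _).comp ev))) ?_
  convert (Pi.basisFun ℚ (Fin 9)).linearIndependent using 1
  ext i : 1
  simp [ev_f]

theorem vol_ne : vol ≠ 0 := by
  intro h
  have := ev_vol
  rw [h, map_zero] at this
  simp [Prod.ext_iff] at this

theorem one_ne : (1 : A) ≠ 0 := by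
  intro h
  have := congrArg (fun g : Module.End ℚ M => g (1, 0, 0, 0)) (map_one actA)
  rw [h, map_zero] at this
  simp [Prod.ext_iff] at this

theorem piece_one : piece 1 = Submodule.span ℚ (Set.range x) := by
  have h : Submodule.span ℚ (Set.range fun i : Fin 9 => (Pi.single i 1 : Fin 9 → ℚ)) = ⊤ := by
    have := (Pi.basisFun ℚ (Fin 9)).span_eq
    simpa [funext_iff, Set.range] using this
  rw [piece, pow_one, LinearMap.range_eq_map, ← h, Submodule.map_span, Submodule.map_span,
    ← Set.range_comp, ← Set.range_comp]
  rfl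

theorem piece_zero : piece 0 = Submodule.span ℚ {1} := by
  rw [piece, pow_zero, Submodule.one_eq_span, Submodule.map_span]
  simp

theorem piece_succ (n : ℕ) : piece (n + 1) = Submodule.span ℚ (Set.range x) * piece n := by
  rw [← piece_one, piece, piece, piece, pow_one, pow_succ', Submodule.map_mul]

open Pointwise in
theorem piece_two : piece 2 = Submodule.span ℚ (Set.range f) := by
  rw [piece_succ, piece_one, Submodule.span_mul_span]
  apply le_antisymm
  · rw [Submodule.span_le]
    rintro _ ⟨_, ⟨i, rfl⟩, _, ⟨j, rfl⟩, rfl⟩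
    exact xx_mem i j
  · rw [Submodule.span_le]
    rintro _ ⟨k, rfl⟩
    have h : ∀ i j, x i * x j ∈ Submodule.span ℚ (Set.range x * Set.range x) := fun i j =>
      Submodule.subset_span (Set.mul_mem_mul ⟨i, rfl⟩ ⟨j, rfl⟩)
    fin_cases k
    exacts [h _ _, neg_mem (h _ _), neg_mem (h _ _), neg_mem (h _ _), neg_mem (h _ _), h _ _,
      h _ _, h _ _, h _ _]

theorem piece_three : piece 3 = Submodule.span ℚ {vol} := by
  rw [piece_succ, piece_two, Submodule.span_mul_span]
  apply le_antisymm
  · rw [Submodule.span_le]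
    rintro _ ⟨_, ⟨i, rfl⟩, _, ⟨j, rfl⟩, rfl⟩
    simp only [xf]
    split_ifs
    · exact Submodule.mem_span_singleton_self _
    · exact Submodule.zero_mem _
  · rw [Submodule.span_le]
    rintro _ rfl
    exact Submodule.subset_span (Set.mul_mem_mul ⟨0, rfl⟩ ⟨0, rfl⟩)

theorem piece_four (n : ℕ) : piece (n + 4) = ⊥ := by
  induction n with
  | zero =>
    rw [piece_succ, piece_three, Submodule.span_mul_span, Submodule.span_eq_bot]
    rintro _ ⟨_, ⟨i, rfl⟩, _, rfl, rfl⟩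
    exact xvol i
  | succ n ih =>
    rw [show n + 1 + 4 = (n + 4) + 1 by ring, piece_succ, ih, Submodule.mul_bot]

end Stmt19

/-- The quotient of the exterior algebra on `e₁,…,e₉` over `ℚ` by the ideal generated
by the 27 listed quadratic elements has Hilbert series `1 + 9z + 9z² + z³`. -/
theorem stmt_19 :
    Module.finrank ℚ (Stmt19.piece 0) = 1 ∧
    Module.finrank ℚ (Stmt19.piece 1) = 9 ∧
    Module.finrank ℚ (Stmt19.piece 2) = 9 ∧
    Module.finrank ℚ (Stmt19.piece 3) = 1 ∧
    ∀ n, 4 ≤ n → Module.finrank ℚ (Stmt19.piece n) = 0 := by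
  refine ⟨?_, ?_, ?_, ?_, ?_⟩
  · rw [Stmt19.piece_zero]
    exact finrank_span_singleton Stmt19.one_ne
  · rw [Stmt19.piece_one, finrank_span_eq_card Stmt19.li_x]
    simp
  · rw [Stmt19.piece_two, finrank_span_eq_card Stmt19.li_f]
    simp
  · rw [Stmt19.piece_three]
    exact finrank_span_singleton Stmt19.vol_ne
  · intro n hn
    obtain ⟨k, rfl⟩ := Nat.exists_eq_add_of_le' hn
    rw [Stmt19.piece_four]
    exact finrank_bot ℚ _
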